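/- Let ρ and σ be density operators on a finite-dimensional complex Hilbert space with supp(ρ) ⊆ supp(σ), and let α > 1. Then D_α^*(ρ‖σ) = sup over operators T with 0 ≤ T ≤ 𝟙, Tr[ρT] > 0, of { (α/(α−1)) log Tr[ρT] − log Tr[(T^{1/2} σ^{(α−1)/α} T^{1/2})^{α/(α−1)}] }. -/

import Mathlib

open Matrix
open scoped ComplexOrder Kronecker

noncomputable section

/-- Real power of a Hermitian matrix via functional calculus on its support
(Moore–Penrose convention); junk value `0` for non-Hermitian input. -/
def Matrix.rpowH {ι : Type*} [Fintype ι] [DecidableEq ι] (A : Matrix ι ι ℂ) (p : ℝ) :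
    Matrix ι ι ℂ :=
  if hA : A.IsHermitian then
    (hA.eigenvectorUnitary : Matrix ι ι ℂ) *
      Matrix.diagonal (fun i => ((hA.eigenvalues i ^ p : ℝ) : ℂ)) *
      star (hA.eigenvectorUnitary : Matrix ι ι ℂ)
  else 0

/-- Real part of the trace. -/
def retr {ι : Type*} [Fintype ι] (A : Matrix ι ι ℂ) : ℝ :=
  (Matrix.trace A).re

/-- Sandwiched Rényi divergence
`D_α^*(ρ‖σ) = (α-1)⁻¹ log Tr[(σ^{(1-α)/(2α)} ρ σ^{(1-α)/(2α)})^α]`. -/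
def sandwichedRenyiDiv {ι : Type*} [Fintype ι] [DecidableEq ι]
    (α : ℝ) (ρ σ : Matrix ι ι ℂ) : ℝ :=
  (α - 1)⁻¹ * Real.log (retr (Matrix.rpowH
    (Matrix.rpowH σ ((1 - α) / (2 * α)) * ρ * Matrix.rpowH σ ((1 - α) / (2 * α))) α))

/-!
Put `s = (1 - α) / (2α)`, `X = σ^s ρ σ^s` and, for a test operator `T`, `Y = σ^{-s} T σ^{-s}`. The
support condition gives `Tr[ρT] = Tr[XY]`, and `T^{1/2} σ^{(α-1)/α} T^{1/2}` has the same spectrum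
as `Y`. With `β = α / (α - 1)` conjugate to `α`, the trace Hölder inequality
`Tr[XY] ≤ Tr[X^α]^{1/α} Tr[Y^β]^{1/β}` is, after taking logarithms, the bound by the divergence.
Equality holds when `Y` is a multiple of `X^{α-1}`, which is realised by a small multiple of
`T = σ^s X^{α-1} σ^s`; the scale is immaterial, since the objective is invariant under `T ↦ cT`.
Hölder itself reduces to the scalar inequality, because in the eigenbases of `X` and `Y` the trace
`Tr[XY]` is a doubly stochastic pairing of the eigenvalues.
-/

section MatrixFunctionalCalculus

variable {ι 𝕜 : Type*} [Fintype ι] [DecidableEq ι] [RCLike 𝕜] {A : Matrix ι ι 𝕜}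

lemma cfc_mul_cfc (f g : ℝ → ℝ) : cfc f A * cfc g A = cfc (fun x ↦ f x * g x) A :=
  (cfc_mul f g A (A.finite_real_spectrum.continuousOn f)
    (A.finite_real_spectrum.continuousOn g)).symm

lemma cfc_cfc (hA : A.IsHermitian) (g f : ℝ → ℝ) :
    cfc g (cfc f A) = cfc (fun x ↦ g (f x)) A :=
  (cfc_comp' g f A ((A.finite_real_spectrum.image f).continuousOn g)
    (A.finite_real_spectrum.continuousOn f) hA).symm

lemma cfc_congr_of_nonneg (hA : A.PosSemidef) {f g : ℝ → ℝ} (h : ∀ x, 0 ≤ x → f x = g x) :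
    cfc f A = cfc g A :=
  cfc_congr fun x hx ↦ h x <| by
    rw [hA.1.spectrum_real_eq_range_eigenvalues] at hx
    obtain ⟨i, rfl⟩ := hx
    exact hA.eigenvalues_nonneg i

end MatrixFunctionalCalculus

section RealPowers

variable {ι : Type*} [Fintype ι] [DecidableEq ι] {A : Matrix ι ι ℂ}

lemma rpowH_eq_cfc (hA : A.IsHermitian) (p : ℝ) : A.rpowH p = cfc (fun x : ℝ ↦ x ^ p) A := by
  rw [hA.cfc_eq, Matrix.rpowH, dif_pos hA, IsHermitian.cfc, Unitary.conjStarAlgAut_apply]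
  rfl

lemma isHermitian_rpowH (A : Matrix ι ι ℂ) (p : ℝ) : (A.rpowH p).IsHermitian := by
  by_cases hA : A.IsHermitian
  · rw [rpowH_eq_cfc hA]
    exact cfc_predicate _ A
  · rw [Matrix.rpowH, dif_neg hA]
    exact isHermitian_zero

lemma posSemidef_rpowH (hA : A.PosSemidef) (p : ℝ) : (A.rpowH p).PosSemidef := by
  rw [Matrix.rpowH, dif_pos hA.1]
  refine (PosSemidef.diagonal fun i ↦ ?_).mul_mul_conjTranspose_same _
  exact Complex.zero_le_real.2 (Real.rpow_nonneg (hA.eigenvalues_nonneg i) p)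

lemma rpowH_one (hA : A.IsHermitian) : A.rpowH 1 = A := by
  simp only [rpowH_eq_cfc hA, Real.rpow_one]
  exact cfc_id' ℝ A hA

lemma one_rpowH (p : ℝ) : (1 : Matrix ι ι ℂ).rpowH p = 1 := by
  rw [rpowH_eq_cfc isHermitian_one, cfc_apply_one, Real.one_rpow, map_one]

lemma rpowH_mul_rpowH (hA : A.PosSemidef) {p q : ℝ} (hpq : p + q ≠ 0) :
    A.rpowH p * A.rpowH q = A.rpowH (p + q) := by
  simp only [rpowH_eq_cfc hA.1, cfc_mul_cfc]
  exact cfc_congr_of_nonneg hA fun x hx ↦ (Real.rpow_add' hx hpq).symm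

lemma rpowH_rpowH (hA : A.PosSemidef) (p q : ℝ) : (A.rpowH p).rpowH q = A.rpowH (p * q) := by
  rw [rpowH_eq_cfc (isHermitian_rpowH A p), rpowH_eq_cfc hA.1, rpowH_eq_cfc hA.1, cfc_cfc hA.1]
  exact cfc_congr_of_nonneg hA fun x hx ↦ (Real.rpow_mul hx p q).symm

lemma smul_rpowH (hA : A.PosSemidef) {c : ℝ} (hc : 0 ≤ c) (p : ℝ) :
    (c • A).rpowH p = c ^ p • A.rpowH p := by
  have smul_eq_cfc : c • A = cfc (fun x : ℝ ↦ c * x) A := (cfc_const_mul_id c A hA.1).symm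
  rw [rpowH_eq_cfc (hA.smul hc).1, rpowH_eq_cfc hA.1, smul_eq_cfc, cfc_cfc hA.1,
    ← cfc_smul (c ^ p) _ A (A.finite_real_spectrum.continuousOn _)]
  exact cfc_congr_of_nonneg hA fun x hx ↦ Real.mul_rpow hc hx

/-- The factor `A ^ p * A ^ (-p)` acts as the support projection of `A`, whereas `A.rpowH 0 = 1`
because `0 ^ 0 = 1` in `ℝ`. -/
lemma mul_rpowH_mul_rpowH_neg (hA : A.PosSemidef) (p : ℝ) :
    A * (A.rpowH p * A.rpowH (-p)) = A := by
  nth_rw 1 4 [← rpowH_one hA.1]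
  simp only [rpowH_eq_cfc hA.1, cfc_mul_cfc]
  refine cfc_congr_of_nonneg hA fun x hx ↦ ?_
  rcases hx.eq_or_lt with rfl | hx
  · simp
  · rw [← Real.rpow_add hx, add_neg_cancel, Real.rpow_zero, mul_one]

lemma rpowH_mulVec_eq_zero (hA : A.PosSemidef) {p : ℝ} (hp : p ≠ 0) {v : ι → ℂ}
    (hv : A *ᵥ v = 0) : A.rpowH p *ᵥ v = 0 := by
  have rpowH_eq : A.rpowH p = A.rpowH (p - 1) * A := by
    nth_rw 3 [← rpowH_one hA.1]
    rw [rpowH_mul_rpowH hA (by simpa using hp), sub_add_cancel]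
  rw [rpowH_eq, ← mulVec_mulVec, hv, mulVec_zero]

end RealPowers

section RealTrace

variable {ι : Type*} [Fintype ι]

lemma retr_mul_comm (A B : Matrix ι ι ℂ) : retr (A * B) = retr (B * A) := by
  rw [retr, retr, trace_mul_comm]

lemma retr_smul (c : ℝ) (A : Matrix ι ι ℂ) : retr (c • A) = c * retr A := by
  rw [retr, retr, trace_smul, Complex.smul_re, smul_eq_mul]

variable [DecidableEq ι]

lemma retr_rpowH {A : Matrix ι ι ℂ} (hA : A.IsHermitian) (p : ℝ) :
    retr (A.rpowH p) = ∑ i, hA.eigenvalues i ^ p := by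
  rw [Matrix.rpowH, dif_pos hA, retr, trace_mul_cycle, Unitary.coe_star_mul_self, one_mul,
    trace_diagonal, Complex.re_sum]
  simp only [Complex.ofReal_re]

lemma retr_rpowH_pos {A : Matrix ι ι ℂ} (hA : A.PosSemidef) (hA0 : A ≠ 0) (p : ℝ) :
    0 < retr (A.rpowH p) := by
  obtain ⟨i, hi⟩ := Function.ne_iff.1 (hA.1.eigenvalues_eq_zero_iff.not.2 hA0)
  rw [retr_rpowH hA.1]
  exact Finset.sum_pos' (fun j _ ↦ Real.rpow_nonneg (hA.eigenvalues_nonneg j) p)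
    ⟨i, Finset.mem_univ i, Real.rpow_pos_of_pos ((hA.eigenvalues_nonneg i).lt_of_ne' hi) p⟩

lemma retr_rpowH_mul_comm {A B : Matrix ι ι ℂ} (hAB : (A * B).IsHermitian)
    (hBA : (B * A).IsHermitian) (p : ℝ) :
    retr ((A * B).rpowH p) = retr ((B * A).rpowH p) := by
  rw [retr_rpowH hAB, retr_rpowH hBA,
    (IsHermitian.eigenvalues_eq_eigenvalues_iff hAB hBA).2 (charpoly_mul_comm A B)]

end RealTrace

section TraceHolder

variable {ι : Type*} [Fintype ι] [DecidableEq ι]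

lemma sum_mul_le_Lp_mul_Lq_of_mem_doublyStochastic {D : Matrix ι ι ℝ}
    (hD : D ∈ doublyStochastic ℝ ι) {x y : ι → ℝ} (hx : ∀ i, 0 ≤ x i) (hy : ∀ j, 0 ≤ y j)
    {p q : ℝ} (hpq : p.HolderConjugate q) :
    ∑ i, ∑ j, x i * y j * D i j ≤ (∑ i, x i ^ p) ^ (1 / p) * (∑ j, y j ^ q) ^ (1 / q) := by
  have hD0 (i j : ι) : 0 ≤ D i j := nonneg_of_mem_doublyStochastic hD
  have rpow_split {z w r : ℝ} (hz : 0 ≤ z) (hw : 0 ≤ w) (hr : r ≠ 0) :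
      (z * w ^ (1 / r)) ^ r = z ^ r * w := by
    rw [Real.mul_rpow hz (Real.rpow_nonneg hw _), ← Real.rpow_mul hw, one_div_mul_cancel hr,
      Real.rpow_one]
  calc ∑ i, ∑ j, x i * y j * D i j
      = ∑ a : ι × ι, x a.1 * D a.1 a.2 ^ (1 / p) * (y a.2 * D a.1 a.2 ^ (1 / q)) := by
        rw [Fintype.sum_prod_type]
        refine Finset.sum_congr rfl fun i _ ↦ Finset.sum_congr rfl fun j _ ↦ ?_
        rw [mul_mul_mul_comm, ← Real.rpow_add_of_nonneg (hD0 i j) hpq.one_div_nonneg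
          hpq.symm.one_div_nonneg, hpq.one_div_add_one_div, div_one, Real.rpow_one]
    _ ≤ (∑ a : ι × ι, (x a.1 * D a.1 a.2 ^ (1 / p)) ^ p) ^ (1 / p) *
          (∑ a : ι × ι, (y a.2 * D a.1 a.2 ^ (1 / q)) ^ q) ^ (1 / q) :=
        Real.inner_le_Lp_mul_Lq_of_nonneg _ hpq
          (fun a _ ↦ mul_nonneg (hx _) (Real.rpow_nonneg (hD0 _ _) _))
          (fun a _ ↦ mul_nonneg (hy _) (Real.rpow_nonneg (hD0 _ _) _))
    _ = (∑ i, x i ^ p) ^ (1 / p) * (∑ j, y j ^ q) ^ (1 / q) := by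
        simp only [rpow_split (hx _) (hD0 _ _) hpq.ne_zero,
          rpow_split (hy _) (hD0 _ _) hpq.symm.ne_zero]
        rw [Fintype.sum_prod_type, Fintype.sum_prod_type_right]
        simp only [← Finset.mul_sum, sum_row_of_mem_doublyStochastic hD,
          sum_col_of_mem_doublyStochastic hD, mul_one]

lemma map_normSq_mem_doublyStochastic {W : Matrix ι ι ℂ} (hW : W ∈ unitaryGroup ι ℂ) :
    W.map Complex.normSq ∈ doublyStochastic ℝ ι := by
  refine mem_doublyStochastic_iff_sum.2
    ⟨fun i j ↦ Complex.normSq_nonneg _, fun i ↦ ?_, fun j ↦ ?_⟩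
  · have hrow := congrFun (congrFun (mem_unitaryGroup_iff.1 hW) i) i
    simp only [mul_apply, star_apply, one_apply_eq, Complex.star_def, Complex.mul_conj] at hrow
    exact_mod_cast hrow
  · have hcol := congrFun (congrFun (mem_unitaryGroup_iff'.1 hW) j) j
    simp only [mul_apply, star_apply, one_apply_eq, Complex.star_def,
      ← Complex.normSq_eq_conj_mul_self] at hcol
    exact_mod_cast hcol

lemma retr_diagonal_mul_conj_diagonal (x y : ι → ℝ) (W : Matrix ι ι ℂ) :
    retr (diagonal (fun i ↦ (x i : ℂ)) * (W * diagonal (fun j ↦ (y j : ℂ)) * star W)) =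
      ∑ i, ∑ j, x i * y j * Complex.normSq (W i j) := by
  rw [retr, trace, Complex.re_sum]
  refine Finset.sum_congr rfl fun i _ ↦ ?_
  rw [diag_apply, diagonal_mul, mul_apply, Finset.mul_sum, Complex.re_sum]
  refine Finset.sum_congr rfl fun j _ ↦ ?_
  rw [mul_diagonal, star_apply, Complex.star_def, mul_right_comm (W i j),
    Complex.mul_conj, ← Complex.ofReal_mul, ← Complex.ofReal_mul, Complex.ofReal_re]
  ring

/-- The weights are `|⟨uᵢ, vⱼ⟩|²` for the eigenbases `u` of `X` and `v` of `Y`. -/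
lemma exists_doublyStochastic_retr_mul_eq_sum {X Y : Matrix ι ι ℂ} (hX : X.IsHermitian)
    (hY : Y.IsHermitian) :
    ∃ D ∈ doublyStochastic ℝ ι,
      retr (X * Y) = ∑ i, ∑ j, hX.eigenvalues i * hY.eigenvalues j * D i j := by
  set U := (hX.eigenvectorUnitary : Matrix ι ι ℂ)
  set V := (hY.eigenvectorUnitary : Matrix ι ι ℂ)
  set W := star U * V with hW
  set Λ : Matrix ι ι ℂ := diagonal fun i ↦ (hX.eigenvalues i : ℂ)
  set M : Matrix ι ι ℂ := diagonal fun j ↦ (hY.eigenvalues j : ℂ)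
  have hXU : X = U * Λ * star U := hX.spectral_theorem
  have hYV : Y = V * M * star V := hY.spectral_theorem
  have hWU : W ∈ unitaryGroup ι ℂ := (star hX.eigenvectorUnitary * hY.eigenvectorUnitary).2
  refine ⟨W.map Complex.normSq, map_normSq_mem_doublyStochastic hWU, ?_⟩
  calc retr (X * Y)
      = retr (U * (Λ * star U * (V * M * star V))) := by
        rw [hXU, hYV]
        simp only [Matrix.mul_assoc]
    _ = retr (Λ * (W * M * star W)) := by
        rw [retr_mul_comm, hW, star_mul, star_star]
        simp only [Matrix.mul_assoc]
    _ = _ := retr_diagonal_mul_conj_diagonal _ _ W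

theorem retr_mul_le_retr_rpowH_mul_retr_rpowH {X Y : Matrix ι ι ℂ} (hX : X.PosSemidef)
    (hY : Y.PosSemidef) {p q : ℝ} (hpq : p.HolderConjugate q) :
    retr (X * Y) ≤ retr (X.rpowH p) ^ (1 / p) * retr (Y.rpowH q) ^ (1 / q) := by
  obtain ⟨D, hD, hXY⟩ := exists_doublyStochastic_retr_mul_eq_sum hX.1 hY.1
  rw [hXY, retr_rpowH hX.1, retr_rpowH hY.1]
  exact sum_mul_le_Lp_mul_Lq_of_mem_doublyStochastic hD hX.eigenvalues_nonneg
    hY.eigenvalues_nonneg hpq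

lemma mul_log_retr_mul_sub_log_le {X Y : Matrix ι ι ℂ} (hX : X.PosSemidef) (hY : Y.PosSemidef)
    {p q : ℝ} (hpq : p.HolderConjugate q) (hXY : 0 < retr (X * Y)) :
    q * Real.log (retr (X * Y)) - Real.log (retr (Y.rpowH q)) ≤
      (p - 1)⁻¹ * Real.log (retr (X.rpowH p)) := by
  have hX0 : X ≠ 0 := by rintro rfl; simp [retr] at hXY
  have hY0 : Y ≠ 0 := by rintro rfl; simp [retr] at hXY
  have hXp := retr_rpowH_pos hX hX0 p
  have hYq := retr_rpowH_pos hY hY0 q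
  have log_holder : Real.log (retr (X * Y)) ≤
      1 / p * Real.log (retr (X.rpowH p)) + 1 / q * Real.log (retr (Y.rpowH q)) := by
    rw [← Real.log_rpow hXp, ← Real.log_rpow hYq, ← Real.log_mul
      (Real.rpow_pos_of_pos hXp _).ne' (Real.rpow_pos_of_pos hYq _).ne']
    exact Real.log_le_log hXY (retr_mul_le_retr_rpowH_mul_retr_rpowH hX hY hpq)
  have hqp : q * (1 / p) = (p - 1)⁻¹ := by
    have := hpq.ne_zero
    have := hpq.sub_one_ne_zero
    rw [hpq.conjugate_eq]
    field_simp
  have hqq : q * (1 / q) = 1 := mul_one_div_cancel hpq.symm.ne_zero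
  rw [sub_le_iff_le_add, ← hqp]
  calc q * Real.log (retr (X * Y))
      ≤ q * (1 / p * Real.log (retr (X.rpowH p)) + 1 / q * Real.log (retr (Y.rpowH q))) :=
        mul_le_mul_of_nonneg_left log_holder hpq.symm.nonneg
    _ = q * (1 / p) * Real.log (retr (X.rpowH p)) + Real.log (retr (Y.rpowH q)) := by
        rw [mul_add, ← mul_assoc, ← mul_assoc, hqq, one_mul]

lemma retr_mul_smul_rpowH_sub_one {X : Matrix ι ι ℂ} (hX : X.PosSemidef) {p : ℝ} (hp : p ≠ 0)
    (c : ℝ) : retr (X * (c • X.rpowH (p - 1))) = c * retr (X.rpowH p) := by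
  nth_rw 1 [mul_smul_comm, retr_smul, ← rpowH_one hX.1]
  rw [rpowH_mul_rpowH hX (by simpa using hp), add_sub_cancel]

lemma mul_log_retr_mul_sub_log_eq {X : Matrix ι ι ℂ} (hX : X.PosSemidef) (hX0 : X ≠ 0)
    {p q : ℝ} (hpq : p.HolderConjugate q) {c : ℝ} (hc : 0 < c) :
    q * Real.log (retr (X * (c • X.rpowH (p - 1))))
        - Real.log (retr ((c • X.rpowH (p - 1)).rpowH q)) =
      (p - 1)⁻¹ * Real.log (retr (X.rpowH p)) := by
  have hXp := retr_rpowH_pos hX hX0 p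
  have retr_smul_rpowH : retr ((c • X.rpowH (p - 1)).rpowH q) = c ^ q * retr (X.rpowH p) := by
    rw [smul_rpowH (posSemidef_rpowH hX _) hc.le, retr_smul, rpowH_rpowH hX,
      hpq.sub_one_mul_conj]
  have hq : q - 1 = (p - 1)⁻¹ := by
    have := hpq.sub_one_ne_zero
    rw [hpq.conjugate_eq]
    field_simp
    ring
  rw [retr_mul_smul_rpowH_sub_one hX hpq.ne_zero, retr_smul_rpowH, Real.log_mul hc.ne' hXp.ne',
    Real.log_mul (Real.rpow_pos_of_pos hc q).ne' hXp.ne', Real.log_rpow hc, ← hq]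
  ring

end TraceHolder

lemma mul_eq_mul_of_mulVec_ker_le {k l m n R : Type*} [Fintype m] [NonUnitalRing R]
    {A : Matrix l m R} {B : Matrix n m R} (hker : ∀ v, B *ᵥ v = 0 → A *ᵥ v = 0)
    {C D : Matrix m k R} (hCD : B * C = B * D) : A * C = A * D := by
  rw [← sub_eq_zero, ← Matrix.mul_sub] at hCD ⊢
  ext i j
  exact congrFun (hker ((C - D).col j) (funext fun i ↦ congrFun (congrFun hCD i) j)) i

open scoped MatrixOrder Matrix.Norms.L2Operator in
lemma exists_pos_one_sub_smul_posSemidef {ι : Type*} [Finite ι] [DecidableEq ι]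
    {M : Matrix ι ι ℂ} (hM : M.IsHermitian) :
    ∃ c : ℝ, 0 < c ∧ (1 - c • M).PosSemidef := by
  have := Fintype.ofFinite ι
  have hpos : 0 < ‖M‖ + 1 := by positivity
  have hle : M ≤ (‖M‖ + 1) • (1 : Matrix ι ι ℂ) := by
    rw [← Algebra.algebraMap_eq_smul_one]
    exact (IsSelfAdjoint.le_algebraMap_norm_self (a := M) hM).trans
      (algebraMap_mono _ (by simp))
  refine ⟨(‖M‖ + 1)⁻¹, inv_pos.2 hpos, ?_⟩
  have hsmul := (le_iff.1 hle).smul (inv_nonneg.2 hpos.le)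
  rwa [smul_sub, inv_smul_smul₀ hpos.ne'] at hsmul

section Sandwich

variable {ι : Type*} [Fintype ι] [DecidableEq ι]

/-- The operator `B ^ p * A * B ^ p`. Both `σ^{(1-α)/(2α)} ρ σ^{(1-α)/(2α)}` and
`T^{1/2} σ^{(α-1)/α} T^{1/2}` are of this form. -/
def sandwich (B : Matrix ι ι ℂ) (p : ℝ) (A : Matrix ι ι ℂ) : Matrix ι ι ℂ :=
  B.rpowH p * A * B.rpowH p

lemma posSemidef_sandwich (B : Matrix ι ι ℂ) (p : ℝ) {A : Matrix ι ι ℂ} (hA : A.PosSemidef) :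
    (sandwich B p A).PosSemidef := by
  have hBAB := hA.mul_mul_conjTranspose_same (B.rpowH p)
  rwa [isHermitian_rpowH B p] at hBAB

lemma sandwich_smul (B : Matrix ι ι ℂ) (p c : ℝ) (A : Matrix ι ι ℂ) :
    sandwich B p (c • A) = c • sandwich B p A := by
  rw [sandwich, sandwich, mul_smul_comm, smul_mul_assoc]

lemma retr_sandwich_mul (B : Matrix ι ι ℂ) (p : ℝ) (A C : Matrix ι ι ℂ) :
    retr (sandwich B p A * C) = retr (A * sandwich B p C) := by
  rw [sandwich, Matrix.mul_assoc, Matrix.mul_assoc, retr_mul_comm, sandwich]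
  simp only [Matrix.mul_assoc]

lemma sandwich_mulVec_eq_zero {B : Matrix ι ι ℂ} (hB : B.PosSemidef) {p : ℝ} (hp : p ≠ 0)
    (A : Matrix ι ι ℂ) {v : ι → ℂ} (hv : B *ᵥ v = 0) : sandwich B p A *ᵥ v = 0 := by
  rw [sandwich, ← mulVec_mulVec, rpowH_mulVec_eq_zero hB hp hv, mulVec_zero]

lemma sandwich_neg_sandwich {A B : Matrix ι ι ℂ} (hA : A.IsHermitian) (hB : B.PosSemidef)
    (hker : ∀ v, B *ᵥ v = 0 → A *ᵥ v = 0) (p : ℝ) :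
    sandwich B (-p) (sandwich B p A) = A := by
  have mul_support : A * (B.rpowH p * B.rpowH (-p)) = A := by
    have := mul_eq_mul_of_mulVec_ker_le hker
      ((mul_rpowH_mul_rpowH_neg hB p).trans (Matrix.mul_one B).symm)
    rwa [Matrix.mul_one] at this
  have support_mul : B.rpowH (-p) * B.rpowH p * A = A := by
    have := congrArg conjTranspose mul_support
    rwa [conjTranspose_mul, conjTranspose_mul, isHermitian_rpowH B p, isHermitian_rpowH B (-p),
      hA] at this
  calc sandwich B (-p) (sandwich B p A)
      = B.rpowH (-p) * B.rpowH p * (A * (B.rpowH p * B.rpowH (-p))) := by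
        simp only [sandwich, Matrix.mul_assoc]
    _ = A := by rw [mul_support, support_mul]

lemma retr_mul_eq_retr_sandwich_mul_sandwich_neg {A B : Matrix ι ι ℂ} (hA : A.IsHermitian)
    (hB : B.PosSemidef) (hker : ∀ v, B *ᵥ v = 0 → A *ᵥ v = 0) (p : ℝ) (C : Matrix ι ι ℂ) :
    retr (A * C) = retr (sandwich B p A * sandwich B (-p) C) := by
  rw [← retr_sandwich_mul, sandwich_neg_sandwich hA hB hker]

lemma sandwich_ne_zero {A B : Matrix ι ι ℂ} (hA : A.IsHermitian) (hA0 : A ≠ 0)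
    (hB : B.PosSemidef) (hker : ∀ v, B *ᵥ v = 0 → A *ᵥ v = 0) (p : ℝ) :
    sandwich B p A ≠ 0 := by
  intro h
  apply hA0
  rw [← sandwich_neg_sandwich hA hB hker p, h, sandwich, Matrix.mul_zero, Matrix.zero_mul]

/-- Both operators are products of `A ^ p * B ^ q` and `B ^ q * A ^ p`, in the two orders. -/
lemma retr_rpowH_sandwich_rpowH_comm {A B : Matrix ι ι ℂ} (hA : A.PosSemidef)
    (hB : B.PosSemidef) {p q : ℝ} (hp : p ≠ 0) (hq : q ≠ 0) (r : ℝ) :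
    retr ((sandwich A p (B.rpowH (2 * q))).rpowH r) =
      retr ((sandwich B q (A.rpowH (2 * p))).rpowH r) := by
  have sandwich_eq {C D : Matrix ι ι ℂ} (hD : D.PosSemidef) (s : ℝ) {t : ℝ} (ht : t ≠ 0) :
      sandwich C s (D.rpowH (2 * t)) = C.rpowH s * D.rpowH t * (D.rpowH t * C.rpowH s) := by
    rw [two_mul, ← rpowH_mul_rpowH hD (by simpa [← two_mul] using ht)]
    simp only [sandwich, Matrix.mul_assoc]
  have hAB := (posSemidef_sandwich A p (posSemidef_rpowH hB (2 * q))).1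
  have hBA := (posSemidef_sandwich B q (posSemidef_rpowH hA (2 * p))).1
  rw [sandwich_eq hB p hq] at hAB ⊢
  rw [sandwich_eq hA q hp] at hBA ⊢
  exact retr_rpowH_mul_comm hAB hBA r

lemma exists_le_one_sandwich_neg_eq_smul {A B : Matrix ι ι ℂ} (hA : A.PosSemidef)
    (hB : B.PosSemidef) (hker : ∀ v, B *ᵥ v = 0 → A *ᵥ v = 0) (p : ℝ) :
    ∃ (T : Matrix ι ι ℂ) (c : ℝ), T.PosSemidef ∧ (1 - T).PosSemidef ∧ 0 < c ∧
      sandwich B (-p) T = c • A := by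
  have hBAB := posSemidef_sandwich B p hA
  obtain ⟨c, hc, hle⟩ := exists_pos_one_sub_smul_posSemidef hBAB.1
  refine ⟨c • sandwich B p A, c, hBAB.smul hc.le, hle, hc, ?_⟩
  rw [sandwich_smul, sandwich_neg_sandwich hA.1 hB hker]

end Sandwich

/-- In `ℝ` the inner supremum is `0` at the points where `P` fails. -/
lemma eq_biSup_of_isGreatest_image {β : Type*} {P : β → Prop} {f : β → ℝ} {M : ℝ}
    (hM : IsGreatest (f '' {x | P x}) M) (hM0 : 0 ≤ M) : M = ⨆ (x : β) (_ : P x), f x := by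
  have hle (x : β) : ⨆ (_ : P x), f x ≤ M :=
    Real.iSup_le (fun hx ↦ hM.2 (Set.mem_image_of_mem f hx)) hM0
  obtain ⟨⟨x, hx, rfl⟩, -⟩ := hM
  refine le_antisymm ?_ (Real.iSup_le hle hM0)
  exact (ciSup_pos (f := fun _ ↦ f x) hx).ge.trans (le_ciSup ⟨f x, Set.forall_mem_range.2 hle⟩ x)

section Variational

variable {ι : Type*} [Fintype ι] [DecidableEq ι] {ρ σ : Matrix ι ι ℂ} {α : ℝ}

/-- The functional of the test operator `T` whose supremum is the sandwiched Rényi divergence. -/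
def sandwichedRenyiObjective (α : ℝ) (ρ σ T : Matrix ι ι ℂ) : ℝ :=
  α / (α - 1) * Real.log (retr (ρ * T))
    - Real.log (retr ((sandwich T 2⁻¹ (σ.rpowH ((α - 1) / α))).rpowH (α / (α - 1))))

lemma sandwichedRenyiObjective_eq (hρ : ρ.IsHermitian) (hσ : σ.PosSemidef)
    (hsupp : ∀ v, σ *ᵥ v = 0 → ρ *ᵥ v = 0) (hα : 1 < α) {T : Matrix ι ι ℂ} (hT : T.PosSemidef) :
    sandwichedRenyiObjective α ρ σ T =
      α / (α - 1) * Real.log (retr (sandwich σ ((1 - α) / (2 * α)) ρ *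
          sandwich σ (-((1 - α) / (2 * α))) T))
        - Real.log (retr ((sandwich σ (-((1 - α) / (2 * α))) T).rpowH (α / (α - 1)))) := by
  have hs : -((1 - α) / (2 * α)) ≠ 0 :=
    neg_ne_zero.2 (div_ne_zero (by linarith) (by linarith))
  have hexp : (α - 1) / α = 2 * -((1 - α) / (2 * α)) := by field_simp; ring
  rw [sandwichedRenyiObjective, hexp,
    retr_rpowH_sandwich_rpowH_comm hT hσ (inv_ne_zero two_ne_zero) hs,
    mul_inv_cancel₀ two_ne_zero, rpowH_one hT.1,
    ← retr_mul_eq_retr_sandwich_mul_sandwich_neg hρ hσ hsupp]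

theorem sandwichedRenyiObjective_le (hρ : ρ.PosSemidef) (hσ : σ.PosSemidef)
    (hsupp : ∀ v, σ *ᵥ v = 0 → ρ *ᵥ v = 0) (hα : 1 < α) {T : Matrix ι ι ℂ} (hT : T.PosSemidef)
    (hρT : 0 < retr (ρ * T)) :
    sandwichedRenyiObjective α ρ σ T ≤ sandwichedRenyiDiv α ρ σ := by
  rw [retr_mul_eq_retr_sandwich_mul_sandwich_neg hρ.1 hσ hsupp ((1 - α) / (2 * α))] at hρT
  rw [sandwichedRenyiObjective_eq hρ.1 hσ hsupp hα hT]
  exact mul_log_retr_mul_sub_log_le (posSemidef_sandwich _ _ hρ) (posSemidef_sandwich _ _ hT)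
    (Real.HolderConjugate.conjExponent hα) hρT

theorem exists_sandwichedRenyiObjective_eq (hρ : ρ.PosSemidef) (hρ0 : ρ ≠ 0)
    (hσ : σ.PosSemidef) (hsupp : ∀ v, σ *ᵥ v = 0 → ρ *ᵥ v = 0) (hα : 1 < α) :
    ∃ T : Matrix ι ι ℂ, (T.PosSemidef ∧ (1 - T).PosSemidef ∧ 0 < retr (ρ * T)) ∧
      sandwichedRenyiObjective α ρ σ T = sandwichedRenyiDiv α ρ σ := by
  set s := (1 - α) / (2 * α) with hs
  have hs0 : s ≠ 0 := div_ne_zero (by linarith) (by linarith)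
  set X := sandwich σ s ρ
  have hX : X.PosSemidef := posSemidef_sandwich σ s hρ
  have hX0 : X ≠ 0 := sandwich_ne_zero hρ.1 hρ0 hσ hsupp s
  have hker (v : ι → ℂ) (hv : σ *ᵥ v = 0) : X.rpowH (α - 1) *ᵥ v = 0 :=
    rpowH_mulVec_eq_zero hX (by linarith) (sandwich_mulVec_eq_zero hσ hs0 ρ hv)
  obtain ⟨T, c, hT, hT1, hc, hTX⟩ :=
    exists_le_one_sandwich_neg_eq_smul (posSemidef_rpowH hX (α - 1)) hσ hker s
  refine ⟨T, ⟨hT, hT1, ?_⟩, ?_⟩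
  · rw [retr_mul_eq_retr_sandwich_mul_sandwich_neg hρ.1 hσ hsupp s, hTX,
      retr_mul_smul_rpowH_sub_one hX (by linarith)]
    exact mul_pos hc (retr_rpowH_pos hX hX0 α)
  · rw [sandwichedRenyiObjective_eq hρ.1 hσ hsupp hα hT, ← hs, hTX]
    exact mul_log_retr_mul_sub_log_eq hX hX0 (Real.HolderConjugate.conjExponent hα) hc

lemma sandwichedRenyiObjective_one (hσ : σ.PosSemidef) (hα0 : α ≠ 0) (hα1 : α ≠ 1) :
    sandwichedRenyiObjective α ρ σ 1 =
      α / (α - 1) * Real.log (retr ρ) - Real.log (retr σ) := by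
  have hα1' : α - 1 ≠ 0 := sub_ne_zero.2 hα1
  rw [sandwichedRenyiObjective, sandwich, one_rpowH, one_mul, mul_one, mul_one, rpowH_rpowH hσ,
    div_mul_div_cancel₀ hα0, div_self hα1', rpowH_one hσ.1]

lemma sandwichedRenyiDiv_nonneg (hρ : ρ.PosSemidef) (hρtr : ρ.trace = 1) (hσ : σ.PosSemidef)
    (hσtr : σ.trace = 1) (hsupp : ∀ v, σ *ᵥ v = 0 → ρ *ᵥ v = 0) (hα : 1 < α) :
    0 ≤ sandwichedRenyiDiv α ρ σ := by
  have hle := sandwichedRenyiObjective_le hρ hσ hsupp hα PosSemidef.one (by simp [retr, hρtr])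
  rw [sandwichedRenyiObjective_one hσ (by linarith) hα.ne'] at hle
  simpa [retr, hρtr, hσtr] using hle

theorem sandwiched_renyi_variational_gt_one_general (hρ : ρ.PosSemidef) (hρ0 : ρ ≠ 0)
    (hσ : σ.PosSemidef) (hsupp : ∀ v, σ *ᵥ v = 0 → ρ *ᵥ v = 0) (hα : 1 < α) :
    IsGreatest (sandwichedRenyiObjective α ρ σ ''
        {T | T.PosSemidef ∧ (1 - T).PosSemidef ∧ 0 < retr (ρ * T)})
      (sandwichedRenyiDiv α ρ σ) := by
  refine ⟨exists_sandwichedRenyiObjective_eq hρ hρ0 hσ hsupp hα, ?_⟩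
  rintro _ ⟨T, ⟨hT, -, hρT⟩, rfl⟩
  exact sandwichedRenyiObjective_le hρ hσ hsupp hα hT hρT

end Variational

/-- variational expression for the sandwiched Rényi divergence, `α > 1`.
`D_α^*(ρ‖σ) = sup { (α/(α-1)) log Tr[ρT] - log Tr[(T^{1/2} σ^{(α-1)/α} T^{1/2})^{α/(α-1)}]
  : 0 ≤ T ≤ 𝟙, Tr[ρT] > 0 }`. -/
theorem sandwiched_renyi_variational_gt_one
    {ι : Type*} [Fintype ι] [DecidableEq ι]
    (ρ σ : Matrix ι ι ℂ)
    (hρ : ρ.PosSemidef) (hρtr : ρ.trace = 1)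
    (hσ : σ.PosSemidef) (hσtr : σ.trace = 1)
    (hsupp : ∀ v : ι → ℂ, σ.mulVec v = 0 → ρ.mulVec v = 0)
    (α : ℝ) (hα : 1 < α) :
    sandwichedRenyiDiv α ρ σ =
      ⨆ (T : Matrix ι ι ℂ)
        (_ : T.PosSemidef ∧ (1 - T).PosSemidef ∧ 0 < retr (ρ * T)),
        (α / (α - 1) * Real.log (retr (ρ * T))
          - Real.log (retr (Matrix.rpowH
              (Matrix.rpowH T (2⁻¹ : ℝ) * Matrix.rpowH σ ((α - 1) / α) *
                Matrix.rpowH T (2⁻¹ : ℝ)) (α / (α - 1))))) := by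
  have hρ0 : ρ ≠ 0 := by rintro rfl; simp at hρtr
  exact eq_biSup_of_isGreatest_image
    (sandwiched_renyi_variational_gt_one_general hρ hρ0 hσ hsupp hα)
    (sandwichedRenyiDiv_nonneg hρ hρtr hσ hσtr hsupp hα)

end
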